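/- arXiv:2405.16043 — 6 statements merged into one kernel-verified Lean document; each statement's English description precedes it below -/
import Mathlib

section
/- (Coverage expansion under weaker assumptions.) Fix a label i, c > 0, q ≥ 0 and η ≥ 0. Suppose M_η(T_i, F) satisfies (c,q,η)-robust expansion on (S_i^good, T_i). Then every classifier f ∈ F satisfies err(f, y | T_i) ≤ P(X \ R_η(f) | T_i) + max( q, err(f, ỹ | S_i)/(c·(1 − α_i)) ). -/
open Finset
open scoped Classical

noncomputable section

variable {X Y : Type*} [Fintype X] [DecidableEq X] [DecidableEq Y]

/-- Probability of a finite set of points under the weight function `μ`. -/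
def Pw (μ : X → ℝ) (A : Finset X) : ℝ := ∑ x ∈ A, μ x

/-- Conditional probability `P(A | B) = P(A ∩ B) / P(B)`. -/
def cPw (μ : X → ℝ) (A B : Finset X) : ℝ := Pw μ (A ∩ B) / Pw μ B

/-- `err(f, g | U) = P({x : f x ≠ g x} | U)`. -/
def errP {Z : Type*} (μ : X → ℝ) (f g : X → Z) (U : Finset X) : ℝ :=
  cPw μ (univ.filter fun x => f x ≠ g x) U

/-- Neighborhood of a set: `N(A) = ⋃_{x ∈ A} N(x)`. -/
def nbhd (N : X → Finset X) (A : Finset X) : Finset X := A.biUnion N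

/-- `r(f, x) = P({x' : f x' ≠ f x} | N(x))`. -/
def rob (μ : X → ℝ) (N : X → Finset X) (f : X → Y) (x : X) : ℝ :=
  cPw μ (univ.filter fun x' => f x' ≠ f x) (N x)

/-- `R_η(f) = {x : r(f,x) ≤ η}`, the set of η-robust points of `f`. -/
def Rset (μ : X → ℝ) (N : X → Finset X) (η : ℝ) (f : X → Y) : Finset X :=
  univ.filter fun x => rob μ N f x ≤ η

/-- Edge weight `w(x, x') = P({x})·P({x'})·1[x ∈ N(x')]`. -/
def wE (μ : X → ℝ) (N : X → Finset X) (x x' : X) : ℝ :=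
  μ x * μ x' * (if x ∈ N x' then 1 else 0)

/-- `w(V, U) = Σ_{x ∈ V, x' ∈ U} w(x, x')`. -/
def wS (μ : X → ℝ) (N : X → Finset X) (V U : Finset X) : ℝ :=
  ∑ x ∈ V, ∑ x' ∈ U, wE μ N x x'

/-- `P_{1-η}(U, A)`: the η-robust neighborhood size of `U` in `A`. -/
def robNbhdSize (μ : X → ℝ) (N : X → Finset X) (η : ℝ) (U A : Finset X) : ℝ :=
  sInf {p : ℝ | ∃ V : Finset X,
    (1 - η) * wS μ N (nbhd N U) U ≤ wS μ N V U ∧ p = cPw μ V A}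

/-- `M` satisfies `(c, q, η)`-robust expansion on `(A, B)`. -/
def RobustExpansion (μ : X → ℝ) (N : X → Finset X) (c q η : ℝ)
    (M : Set (Finset X)) (A B : Finset X) : Prop :=
  ∀ U ∈ M, cPw μ U B > q → robNbhdSize μ N η U A > c * cPw μ U B

/-- `M` satisfies `(c, q)`-expansion on `(A, B)` (the `η = 0` case). -/
def Expansion (μ : X → ℝ) (N : X → Finset X) (c q : ℝ)
    (M : Set (Finset X)) (A B : Finset X) : Prop :=
  ∀ U ∈ M, cPw μ U B > q → cPw μ (nbhd N U) A > c * cPw μ U B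

/-- Covered set `S = {x : ỹ x ≠ ∅}`. -/
def Scov (yt : X → Option Y) : Finset X := univ.filter fun x => yt x ≠ none

/-- `S_i = S ∩ X_i`. -/
def SiSet (y : X → Y) (yt : X → Option Y) (i : Y) : Finset X :=
  univ.filter fun x => yt x ≠ none ∧ y x = i

/-- `T_i = T ∩ X_i`. -/
def TiSet (y : X → Y) (yt : X → Option Y) (i : Y) : Finset X :=
  univ.filter fun x => yt x = none ∧ y x = i

/-- `S_i^good = {x ∈ S_i : ỹ x = y x}`. -/
def SiGood (y : X → Y) (yt : X → Option Y) (i : Y) : Finset X :=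
  univ.filter fun x => yt x = some (y x) ∧ y x = i

/-- `S_i^bad = S_i \ S_i^good`. -/
def SiBad (y : X → Y) (yt : X → Option Y) (i : Y) : Finset X :=
  SiSet y yt i \ SiGood y yt i

/-- `α_i = P(S_i^bad | S_i)`. -/
def alphaW (μ : X → ℝ) (y : X → Y) (yt : X → Option Y) (i : Y) : ℝ :=
  cPw μ (SiBad y yt i) (SiSet y yt i)

/-- `M_η(B, F) = {R_η(f) ∩ U(B,f) : f ∈ F}`, the η-robust mistake sets on `B`. -/
def MFam (μ : X → ℝ) (N : X → Finset X) (η : ℝ) (y : X → Y)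
    (B : Finset X) (F : Set (X → Y)) : Set (Finset X) :=
  {A | ∃ f ∈ F, A = Rset μ N η f ∩ (B.filter fun x => f x ≠ y x)}

/-- `M'_η(B, F) = {R_η(f) ∩ (B \ U(B,f)) : f ∈ F}`, the η-robust non-mistake sets on `B`. -/
def MFam' (μ : X → ℝ) (N : X → Finset X) (η : ℝ) (y : X → Y)
    (B : Finset X) (F : Set (X → Y)) : Set (Finset X) :=
  {A | ∃ f ∈ F, A = Rset μ N η f ∩ (B.filter fun x => f x = y x)}

/-- Coverage expansion under weaker assumptions,
Theorem `thm:covex-direct-genrobust-apdx`. -/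
theorem coverage_expansion_weaker
    (μ : X → ℝ) (N : X → Finset X) (y : X → Y) (yt : X → Option Y)
    (F : Set (X → Y)) (i : Y) (c q η : ℝ)
    (hμ : ∀ x, 0 ≤ μ x) (hμ1 : ∑ x, μ x = 1)
    (hNsym : ∀ x x', x ∈ N x' ↔ x' ∈ N x)
    (hNpos : ∀ x, 0 < Pw μ (N x))
    (hSi : 0 < Pw μ (SiSet y yt i))
    (hSg : 0 < Pw μ (SiGood y yt i))
    (hSb : 0 < Pw μ (SiBad y yt i))
    (hTi : 0 < Pw μ (TiSet y yt i))
    (hα0 : 0 < alphaW μ y yt i) (hα : alphaW μ y yt i < 1 / 2)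
    (hc : 0 < c) (hq : 0 ≤ q) (hη : 0 ≤ η)
    (hexp : RobustExpansion μ N c q η (MFam μ N η y (TiSet y yt i) F)
      (SiGood y yt i) (TiSet y yt i)) :
    ∀ f ∈ F,
      errP μ f y (TiSet y yt i) ≤
        cPw μ (univ \ Rset μ N η f) (TiSet y yt i)
          + max q
              (errP μ (fun x => some (f x)) yt (SiSet y yt i)
                / (c * (1 - alphaW μ y yt i))) := by
  intro f hf
  have mono : ∀ A B : Finset X, A ⊆ B → Pw μ A ≤ Pw μ B := fun A B h =>
    Finset.sum_le_sum_of_subset_of_nonneg h (fun x _ _ => hμ x)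
  set T := TiSet y yt i with hT
  set R := Rset μ N η f with hR
  set U := R ∩ (T.filter fun x => f x ≠ y x) with hU
  have h1 : errP μ f y T ≤ cPw μ (univ \ R) T + cPw μ U T := by
    unfold errP cPw
    rw [← add_div]
    refine div_le_div_of_nonneg_right ?_ hTi.le
    refine le_trans (mono _ (((univ \ R) ∩ T) ∪ (U ∩ T)) ?_) ?_
    · intro x hx
      simp only [hU, mem_inter, mem_filter, mem_univ, true_and, mem_union, mem_sdiff] at hx ⊢
      tauto
    · unfold Pw
      rw [← Finset.sum_union_inter]
      have : 0 ≤ ∑ x ∈ ((univ \ R) ∩ T) ∩ (U ∩ T), μ x := Finset.sum_nonneg fun x _ => hμ x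
      linarith
  refine h1.trans (add_le_add le_rfl ?_)
  by_cases hqU : cPw μ U T ≤ q
  · exact hqU.trans (le_max_left _ _)
  refine le_trans ?_ (le_max_right _ _)
  have hex := hexp U ⟨f, hf, rfl⟩ (not_le.mp hqU)
  set V : Finset X := univ.filter fun x => f x ≠ i with hV
  -- weights rewritten as sums over `U`
  have hw : ∀ W : Finset X, wS μ N W U = ∑ x' ∈ U, μ x' * Pw μ (W ∩ N x') := by
    intro W
    unfold wS wE Pw
    rw [Finset.sum_comm]
    refine Finset.sum_congr rfl fun x' _ => ?_
    rw [Finset.mul_sum, ← Finset.filter_mem_eq_inter, Finset.sum_filter]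
    refine Finset.sum_congr rfl fun x _ => ?_
    split_ifs <;> ring
  have hVw : (1 - η) * wS μ N (nbhd N U) U ≤ wS μ N V U := by
    rw [hw, hw, Finset.mul_sum]
    refine Finset.sum_le_sum fun x' hx' => ?_
    have e1 : nbhd N U ∩ N x' = N x' := by
      apply Finset.inter_eq_right.mpr
      exact Finset.subset_biUnion_of_mem N hx'
    rw [e1]
    have hxR : rob μ N f x' ≤ η := by
      have := (mem_inter.mp hx').1
      rw [hR] at this
      exact (mem_filter.mp this).2
    have hxi : f x' ≠ i := by
      have h := mem_filter.mp (mem_inter.mp hx').2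
      have h2 := (mem_filter.mp h.1).2.2
      rw [← h2]
      exact h.2
    unfold rob cPw at hxR
    rw [div_le_iff₀ (hNpos x')] at hxR
    have key : Pw μ (N x') ≤
        Pw μ (V ∩ N x') + Pw μ ((univ.filter fun x => f x ≠ f x') ∩ N x') := by
      refine le_trans (mono _ ((V ∩ N x') ∪ ((univ.filter fun x => f x ≠ f x') ∩ N x')) ?_) ?_
      · intro x hx
        simp only [hV, mem_inter, mem_filter, mem_univ, true_and, mem_union]
        by_cases h : f x = f x'
        · left
          exact ⟨h ▸ hxi, hx⟩
        · exact Or.inr ⟨h, hx⟩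
      · unfold Pw
        rw [← Finset.sum_union_inter]
        exact le_add_of_nonneg_right (Finset.sum_nonneg fun x _ => hμ x)
    have : (1 - η) * Pw μ (N x') ≤ Pw μ (V ∩ N x') := by linarith
    nlinarith [mul_le_mul_of_nonneg_left this (hμ x')]
  have hle : robNbhdSize μ N η U (SiGood y yt i) ≤ cPw μ V (SiGood y yt i) := by
    unfold robNbhdSize
    refine csInf_le ⟨0, ?_⟩ ⟨V, hVw, rfl⟩
    rintro p ⟨W, -, rfl⟩
    exact div_nonneg (Finset.sum_nonneg fun x _ => hμ x) hSg.le
  have hsub : SiGood y yt i ⊆ SiSet y yt i := by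
    intro x hx
    simp only [SiGood, SiSet, mem_filter, mem_univ, true_and] at hx ⊢
    refine ⟨?_, hx.2⟩
    rw [hx.1]
    simp
  have hbad : Pw μ (SiBad y yt i) + Pw μ (SiGood y yt i) = Pw μ (SiSet y yt i) :=
    Finset.sum_sdiff hsub
  have hα' : 1 - alphaW μ y yt i = Pw μ (SiGood y yt i) / Pw μ (SiSet y yt i) := by
    have e : SiBad y yt i ∩ SiSet y yt i = SiBad y yt i :=
      Finset.inter_eq_left.mpr Finset.sdiff_subset
    unfold alphaW cPw
    rw [e, eq_div_iff hSi.ne', sub_mul, div_mul_cancel₀ _ hSi.ne']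
    linarith
  have hnum : Pw μ (V ∩ SiGood y yt i) ≤
      Pw μ ((univ.filter fun x => some (f x) ≠ yt x) ∩ SiSet y yt i) := by
    apply mono
    intro x hx
    have hg := (mem_inter.mp hx).2
    refine mem_inter.mpr ⟨?_, hsub hg⟩
    have hv := (mem_filter.mp (mem_inter.mp hx).1).2
    have hg2 := (mem_filter.mp hg).2
    refine mem_filter.mpr ⟨mem_univ _, ?_⟩
    rw [hg2.1, hg2.2]
    intro h
    exact hv (Option.some.inj h)
  have hfin : cPw μ V (SiGood y yt i) * (1 - alphaW μ y yt i) ≤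
      errP μ (fun x => some (f x)) yt (SiSet y yt i) := by
    rw [hα']
    unfold errP cPw
    rw [div_mul_div_cancel₀ hSg.ne']
    refine div_le_div_of_nonneg_right ?_ hSi.le
    refine hnum.trans (mono _ _ ?_)
    intro x hx
    simpa only [mem_inter, mem_filter, mem_univ, true_and] using hx
  have hpos : 0 < 1 - alphaW μ y yt i := by linarith
  rw [le_div_iff₀ (mul_pos hc hpos)]
  nlinarith [mul_le_mul_of_nonneg_right (hex.le.trans hle) hpos.le]
end
end

section
/- (Local-to-global pseudolabel-correction inequality.) Fix a label i, η ≥ 0, c > 0 and 0 ≤ q < 1. Suppose M'_η(S_i^good, F) satisfies (c,q,η)-robust expansion on (S_i^bad, S_i^good), and f ∈ F satisfies P({x : f(x) ≠ ỹ(x) or x ∉ R_η(f)} | S_i) ≤ 1 − q − α_i. Let M_i = {x ∈ S_i : f(x) ≠ y(x)}, U_i = S_i \ M_i, and c' = c/(1 − α_i + c·α_i). Then P(U_i | S_i^bad) ≥ c'·P(U_i ∩ R_η(f) | S_i) + c'·α_i·P(U_i ∩ (X \ R_η(f)) | S_i^bad). -/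
open Finset
open scoped Classical

noncomputable section

variable {X Y : Type*} [Fintype X] [DecidableEq X] [DecidableEq Y]

theorem Pw_nonneg (μ : X → ℝ) (hμ : ∀ x, 0 ≤ μ x) (A : Finset X) : 0 ≤ Pw μ A :=
  Finset.sum_nonneg fun x _ => hμ x

theorem Pw_split (μ : X → ℝ) (A B C : Finset X) (hC : ∀ x, x ∈ C ↔ x ∈ A ∨ x ∈ B)
    (hd : ∀ x, x ∈ A → x ∉ B) : Pw μ C = Pw μ A + Pw μ B := by
  have h : C = A ∪ B := by
    ext x
    rw [hC, Finset.mem_union]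
  rw [h]
  exact Finset.sum_union (Finset.disjoint_left.2 fun x => hd x)

theorem Pw_congr (μ : X → ℝ) (A B : Finset X) (h : ∀ x, x ∈ A ↔ x ∈ B) : Pw μ A = Pw μ B := by
  rw [Finset.ext h]

theorem Pw_mono (μ : X → ℝ) (hμ : ∀ x, 0 ≤ μ x) (A B : Finset X) (h : ∀ x, x ∈ A → x ∈ B) :
    Pw μ A ≤ Pw μ B :=
  Finset.sum_le_sum_of_subset_of_nonneg h fun x _ _ => hμ x

theorem wS_eq (μ : X → ℝ) (N : X → Finset X) (V U : Finset X) :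
    wS μ N V U = ∑ x' ∈ U, μ x' * Pw μ (V ∩ N x') := by
  unfold wS wE Pw
  rw [Finset.sum_comm]
  refine Finset.sum_congr rfl fun x' _ => ?_
  rw [Finset.mul_sum, ← Finset.filter_mem_eq_inter, Finset.sum_filter]
  refine Finset.sum_congr rfl fun x _ => ?_
  split_ifs <;> ring

theorem expansion_bound (μ : X → ℝ) (N : X → Finset X) (η : ℝ) (f : X → Y) (i : Y)
    (W A : Finset X) (hμ : ∀ x, 0 ≤ μ x) (hNpos : ∀ x, 0 < Pw μ (N x))
    (hW : ∀ x ∈ W, f x = i ∧ x ∈ Rset μ N η f) :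
    robNbhdSize μ N η W A ≤ cPw μ (univ.filter fun x => f x = i) A := by
  unfold robNbhdSize
  refine csInf_le ⟨0, ?_⟩ ⟨_, ?_, rfl⟩
  · rintro p ⟨V, _, rfl⟩
    exact div_nonneg (Pw_nonneg μ hμ _) (Pw_nonneg μ hμ _)
  · rw [wS_eq, wS_eq, Finset.mul_sum]
    refine Finset.sum_le_sum fun x hx => ?_
    obtain ⟨hfx, hR⟩ := hW x hx
    have h1 : Pw μ (nbhd N W ∩ N x) = Pw μ (N x) := by
      apply Pw_congr
      intro z
      simp only [nbhd, Finset.mem_inter, Finset.mem_biUnion]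
      exact ⟨fun h => h.2, fun h => ⟨⟨x, hx, h⟩, h⟩⟩
    have h2 : Pw μ (N x) = Pw μ ((univ.filter fun x' => f x' ≠ f x) ∩ N x)
        + Pw μ ((univ.filter fun x => f x = i) ∩ N x) := by
      apply Pw_split
      · intro z
        simp only [Finset.mem_inter, Finset.mem_filter, Finset.mem_univ, true_and, hfx]
        tauto
      · intro z
        simp only [Finset.mem_inter, Finset.mem_filter, Finset.mem_univ, true_and, hfx]
        tauto
    have h3 : rob μ N f x ≤ η := by
      simpa [Rset] using hR
    unfold rob cPw at h3
    rw [div_le_iff₀ (hNpos x)] at h3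
    rw [h1]
    have h4 : (1 - η) * Pw μ (N x) ≤ Pw μ ((univ.filter fun x => f x = i) ∩ N x) := by
      linarith
    have h5 := mul_le_mul_of_nonneg_left h4 (hμ x)
    linarith

/-- Lemma `lemma:local-to-global`:
local-to-global pseudolabel-correction inequality. -/
theorem local_to_global
    (μ : X → ℝ) (N : X → Finset X) (y : X → Y) (yt : X → Option Y)
    (F : Set (X → Y)) (i : Y) (f : X → Y) (η c q : ℝ)
    (hμ : ∀ x, 0 ≤ μ x) (hμ1 : ∑ x, μ x = 1)
    (hNsym : ∀ x x', x ∈ N x' ↔ x' ∈ N x)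
    (hNpos : ∀ x, 0 < Pw μ (N x))
    (hSi : 0 < Pw μ (SiSet y yt i))
    (hSg : 0 < Pw μ (SiGood y yt i))
    (hSb : 0 < Pw μ (SiBad y yt i))
    (hα0 : 0 < alphaW μ y yt i) (hα : alphaW μ y yt i < 1 / 2)
    (hη : 0 ≤ η) (hc : 0 < c) (hq0 : 0 ≤ q) (hq1 : q < 1)
    (hf : f ∈ F)
    (hexp : RobustExpansion μ N c q η (MFam' μ N η y (SiGood y yt i) F)
      (SiBad y yt i) (SiGood y yt i))
    (hcond : cPw μ (univ.filter fun x => some (f x) ≠ yt x ∨ x ∉ Rset μ N η f)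
        (SiSet y yt i) ≤ 1 - q - alphaW μ y yt i) :
    cPw μ (SiSet y yt i \ ((SiSet y yt i).filter fun x => f x ≠ y x)) (SiBad y yt i) ≥
      c / (1 - alphaW μ y yt i + c * alphaW μ y yt i) *
          cPw μ ((SiSet y yt i \ ((SiSet y yt i).filter fun x => f x ≠ y x)) ∩
            Rset μ N η f) (SiSet y yt i)
        + c / (1 - alphaW μ y yt i + c * alphaW μ y yt i) * alphaW μ y yt i *
          cPw μ ((SiSet y yt i \ ((SiSet y yt i).filter fun x => f x ≠ y x)) ∩
            (univ \ Rset μ N η f)) (SiBad y yt i) := by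
  set S := SiSet y yt i with hS
  set G := SiGood y yt i with hG
  set B := SiBad y yt i with hB
  set R := Rset μ N η f with hRdef
  have mS : ∀ x, x ∈ S ↔ yt x ≠ none ∧ y x = i := by intro x; simp [hS, SiSet]
  have mG : ∀ x, x ∈ G ↔ yt x = some (y x) ∧ y x = i := by intro x; simp [hG, SiGood]
  have mB : ∀ x, x ∈ B ↔ x ∈ S ∧ x ∉ G := by intro x; simp [hB, SiBad, ← hS, ← hG]
  have hGS : ∀ x, x ∈ G → x ∈ S := by
    intro x hx
    rw [mG] at hx
    rw [mS, hx.1]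
    exact ⟨by simp, hx.2⟩
  set U := S \ (S.filter fun x => f x ≠ y x) with hU
  have mU : ∀ x, x ∈ U ↔ x ∈ S ∧ f x = y x := by
    intro x
    simp only [hU, Finset.mem_sdiff, Finset.mem_filter]
    tauto
  set W := R ∩ (G.filter fun x => f x = y x) with hWd
  have mW : ∀ x, x ∈ W ↔ x ∈ R ∧ x ∈ G ∧ f x = y x := by
    intro x
    simp only [hWd, Finset.mem_inter, Finset.mem_filter]
  set E := univ.filter (fun x => some (f x) ≠ yt x ∨ x ∉ R) with hE
  have mE : ∀ x, x ∈ E ↔ some (f x) ≠ yt x ∨ x ∉ R := by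
    intro x
    simp [hE]
  have eS : Pw μ S = Pw μ G + Pw μ B := by
    apply Pw_split
    · intro x
      rw [mB]
      have := hGS x
      tauto
    · intro x
      rw [mB]
      tauto
  have eα : alphaW μ y yt i = Pw μ B / Pw μ S := by
    unfold alphaW cPw
    rw [← hB, ← hS]
    congr 1
    apply Pw_congr
    intro x
    rw [Finset.mem_inter, mB]
    tauto
  have eUR : Pw μ ((U ∩ R) ∩ S) = Pw μ W + Pw μ ((U ∩ R) ∩ B) := by
    apply Pw_split
    · intro x
      simp only [Finset.mem_inter, mW, mU, mB]
      have := hGS x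
      tauto
    · intro x
      simp only [Finset.mem_inter, mW, mU, mB]
      tauto
  have eU : Pw μ (U ∩ B) = Pw μ ((U ∩ R) ∩ B) + Pw μ ((U ∩ (univ \ R)) ∩ B) := by
    apply Pw_split
    · intro x
      simp only [Finset.mem_inter, Finset.mem_sdiff, Finset.mem_univ, true_and]
      tauto
    · intro x
      simp only [Finset.mem_inter, Finset.mem_sdiff, Finset.mem_univ, true_and]
      tauto
  have eWG : Pw μ (W ∩ G) = Pw μ W := by
    apply Pw_congr
    intro x
    rw [Finset.mem_inter, mW]
    tauto
  have eSE : Pw μ S ≤ Pw μ (E ∩ S) + (Pw μ W + Pw μ B) := by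
    have h1 : Pw μ S = Pw μ (E ∩ S) + Pw μ (S \ E) := by
      apply Pw_split
      · intro x
        simp only [Finset.mem_inter, Finset.mem_sdiff]
        tauto
      · intro x
        simp only [Finset.mem_inter, Finset.mem_sdiff]
        tauto
    have h2 : Pw μ (W ∪ B) = Pw μ W + Pw μ B := by
      apply Pw_split
      · intro x
        rw [Finset.mem_union]
      · intro x
        rw [mW, mB]
        tauto
    have h3 : Pw μ (S \ E) ≤ Pw μ (W ∪ B) := by
      apply Pw_mono μ hμ
      intro x
      rw [Finset.mem_sdiff, Finset.mem_union, mE, mW, mB]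
      rintro ⟨hxS, hxE⟩
      push Not at hxE
      by_cases hxG : x ∈ G
      · left
        refine ⟨hxE.2, hxG, ?_⟩
        have := ((mG x).1 hxG).1
        rw [← hxE.1] at this
        exact Option.some.inj this
      · exact Or.inr ⟨hxS, hxG⟩
    linarith
  have hW0 := Pw_nonneg μ hμ W
  have hU0 := Pw_nonneg μ hμ (U ∩ B)
  have hqW : q * Pw μ S ≤ Pw μ W := by
    unfold cPw at hcond
    rw [eα, div_le_iff₀ hSi] at hcond
    have : (1 - q - Pw μ B / Pw μ S) * Pw μ S = Pw μ S - q * Pw μ S - Pw μ B := by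
      field_simp
    linarith
  have key : c * Pw μ B * Pw μ W ≤ Pw μ (U ∩ B) * Pw μ G := by
    rcases hW0.eq_or_lt with h0 | hpos
    · rw [← h0, mul_zero]
      exact mul_nonneg hU0 hSg.le
    · have hgt : cPw μ W G > q := by
        unfold cPw
        rw [eWG, gt_iff_lt, lt_div_iff₀ hSg]
        rcases hq0.eq_or_lt with hq | hq
        · rw [← hq]
          simpa using hpos
        · have := mul_pos hq hSb
          rw [eS, mul_add] at hqW
          linarith
      have h1 := hexp W ⟨f, hf, rfl⟩ hgt
      have h2 := expansion_bound μ N η f i W B hμ hNpos (by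
        intro x hx
        rw [mW] at hx
        exact ⟨hx.2.2.trans ((mG x).1 hx.2.1).2, hx.1⟩)
      have h3 := h1.lt.trans_le h2
      unfold cPw at h3
      rw [eWG] at h3
      have h4 : Pw μ ((univ.filter fun x => f x = i) ∩ B) = Pw μ (U ∩ B) := by
        apply Pw_congr
        intro x
        simp only [Finset.mem_inter, Finset.mem_filter, Finset.mem_univ, true_and, mU, mB]
        constructor
        · rintro ⟨h, h', h''⟩
          exact ⟨⟨h', h.trans ((mS x).1 h').2.symm⟩, h', h''⟩
        · rintro ⟨⟨_, h⟩, h', h''⟩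
          exact ⟨h.trans ((mS x).1 h').2, h', h''⟩
      rw [h4, ← mul_div_assoc, div_lt_div_iff₀ hSg hSb] at h3
      linarith
  unfold cPw
  rw [eα, eUR]
  have hden : 0 < Pw μ G + c * Pw μ B := by positivity
  have e1 : c / (1 - Pw μ B / Pw μ S + c * (Pw μ B / Pw μ S))
      = c * Pw μ S / (Pw μ G + c * Pw μ B) := by
    have : 1 - Pw μ B / Pw μ S + c * (Pw μ B / Pw μ S) = (Pw μ G + c * Pw μ B) / Pw μ S := by
      field_simp
      linarith
    rw [this, div_div_eq_mul_div]
  rw [e1]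
  have e2 : c * Pw μ S / (Pw μ G + c * Pw μ B) * ((Pw μ W + Pw μ ((U ∩ R) ∩ B)) / Pw μ S)
      + c * Pw μ S / (Pw μ G + c * Pw μ B) * (Pw μ B / Pw μ S)
        * (Pw μ ((U ∩ (univ \ R)) ∩ B) / Pw μ B)
      = c * (Pw μ W + Pw μ (U ∩ B)) / (Pw μ G + c * Pw μ B) := by
    rw [eU]
    field_simp
    try ring
  rw [e2, ge_iff_le, div_le_div_iff₀ hden hSb]
  nlinarith [key]
end
end

section
/- (Additive expansion implies multiplicative expansion.) Fix a label i, q ≥ 0 and δ > 0. Suppose P(·|S_i) satisfies (q,δ)-additive expansion on S_i^bad: for every U ⊆ S_i^bad with P(U | S_i) > q, it holds that P(N(U) \ S_i^bad | S_i) ≥ P(U | S_i) + δ. Then for every U ⊆ S_i^bad with P(U | S_i^bad) > q/α_i, P(N(U) | S_i^good) > (α_i/(1 − α_i))·P(U | S_i^bad); that is, the distribution satisfies (c, q/α_i)-expansion on the pair (S_i^good, S_i^bad) with c = α_i/(1 − α_i) (and the inequality is strict). -/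
open Finset
open scoped Classical

noncomputable section

variable {X Y : Type*} [Fintype X] [DecidableEq X] [DecidableEq Y]

/-- Lemma `lemma:additive-implies-multiplicative`:
additive expansion implies multiplicative expansion. -/
theorem additive_implies_multiplicative_expansion
    (μ : X → ℝ) (N : X → Finset X) (y : X → Y) (yt : X → Option Y)
    (i : Y) (q δ : ℝ)
    (hμ : ∀ x, 0 ≤ μ x) (hμ1 : ∑ x, μ x = 1)
    (hNsym : ∀ x x', x ∈ N x' ↔ x' ∈ N x)
    (hSi : 0 < Pw μ (SiSet y yt i))
    (hSg : 0 < Pw μ (SiGood y yt i))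
    (hSb : 0 < Pw μ (SiBad y yt i))
    (hα0 : 0 < alphaW μ y yt i) (hα : alphaW μ y yt i < 1 / 2)
    (hq : 0 ≤ q) (hδ : 0 < δ)
    (hadd : ∀ U : Finset X, U ⊆ SiBad y yt i → cPw μ U (SiSet y yt i) > q →
      cPw μ (nbhd N U \ SiBad y yt i) (SiSet y yt i) ≥ cPw μ U (SiSet y yt i) + δ) :
    ∀ U : Finset X, U ⊆ SiBad y yt i →
      cPw μ U (SiBad y yt i) > q / alphaW μ y yt i →
      cPw μ (nbhd N U) (SiGood y yt i) >
        alphaW μ y yt i / (1 - alphaW μ y yt i) * cPw μ U (SiBad y yt i) := by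
  intro U hU hgt
  have hG : SiGood y yt i ⊆ SiSet y yt i := by
    intro x hx
    simp only [SiGood, SiSet, mem_filter] at *
    refine ⟨hx.1, ?_, hx.2.2⟩
    rw [hx.2.1]; simp
  have hB : SiBad y yt i ⊆ SiSet y yt i := sdiff_subset
  have hsum : Pw μ (SiBad y yt i) + Pw μ (SiGood y yt i) = Pw μ (SiSet y yt i) :=
    sum_sdiff hG
  have hN : (nbhd N U \ SiBad y yt i) ∩ SiSet y yt i = nbhd N U ∩ SiGood y yt i := by
    ext x
    have := @hG x
    simp only [SiBad, mem_inter, mem_sdiff]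
    tauto
  have hadd := hadd U hU
  have e1 : U ∩ SiBad y yt i = U := inter_eq_left.2 hU
  have e2 : U ∩ SiSet y yt i = U := inter_eq_left.2 (hU.trans hB)
  have e3 : SiBad y yt i ∩ SiSet y yt i = SiBad y yt i := inter_eq_left.2 hB
  simp only [alphaW, cPw, hN, e1, e2, e3] at *
  generalize Pw μ (SiSet y yt i) = s at *
  generalize Pw μ (SiGood y yt i) = g at *
  generalize Pw μ (SiBad y yt i) = b at *
  generalize Pw μ U = u at *
  generalize Pw μ (nbhd N U ∩ SiGood y yt i) = n at *
  have h1 : u / s > q := by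
    rw [gt_iff_lt, div_lt_iff₀ hα0] at hgt
    have : u / b * (b / s) = u / s := by field_simp
    linarith
  have h2 : u / s < n / s := by linarith [hadd h1]
  have h3 : u < n := (div_lt_div_iff_of_pos_right hSi).1 h2
  have h4 : 1 - b / s = g / s := by
    field_simp
    linarith
  have h5 : b / s / (1 - b / s) * (u / b) = u / g := by
    rw [h4]; field_simp
  rw [h5]
  exact (div_lt_div_iff_of_pos_right hSg).2 h3
end
end

section
/- (Conditionally independent views give perfect robustness and exact expansion.) Suppose X = X1 × X2 for finite sets X1, X2, the pseudolabeler depends only on the first view (ỹ(x1,x2) = ỹ1(x1) for some ỹ1 : X1 → Y ∪ {∅}), and the two views are conditionally independent given the true label: for all A ⊆ X1, B ⊆ X2 and every label i with P(X_i) > 0, P({(x1,x2) : x1 ∈ A, x2 ∈ B} | X_i) = P({x : x1 ∈ A} | X_i)·P({x : x2 ∈ B} | X_i). Define the neighborhood N(x1,x2) = {(x1', x2) : x1' ∈ X1}. Then: (a) every classifier g : X → Y that depends only on the second view (g(x1,x2) = g2(x2)) satisfies r(g,x) = 0 at every x ∈ X, i.e., g is adversarially robust everywhere; and (b) for every such g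 and every label i, if U = {x ∈ T_i : g(x) ≠ y(x)} has P(U | T_i) > 0, then P(N(U) | S_i^good) = P(U | T_i). -/
open Finset
open scoped Classical

noncomputable section

variable {X Y : Type*} [Fintype X] [DecidableEq X] [DecidableEq Y]

/-- Conditional independence: conditioning further on a first-view event changes nothing. -/
theorem ci_aux
    {X1 X2 : Type*} [Fintype X1] [DecidableEq X1] [Fintype X2] [DecidableEq X2]
    (μ : X1 × X2 → ℝ) (XI A B AB C V : Finset (X1 × X2))
    (hCI : cPw μ AB XI = cPw μ A XI * cPw μ B XI)
    (h0 : 0 < Pw μ XI) (hC : A ∩ XI = C) (hC0 : 0 < Pw μ C)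
    (hV : AB ∩ XI = V ∩ C) :
    cPw μ V C = cPw μ B XI := by
  subst hC
  unfold cPw at *
  rw [hV] at hCI
  field_simp at hCI ⊢
  linarith

/-- Conditionally independent views give perfect robustness and
exact expansion; the co-training setting of Blum & Mitchell. -/
theorem cond_indep_views_robust_and_exact_expansion
    {X1 X2 : Type*} [Fintype X1] [DecidableEq X1] [Fintype X2] [DecidableEq X2]
    (μ : X1 × X2 → ℝ) (y : X1 × X2 → Y) (yt1 : X1 → Option Y)
    (hμ : ∀ x, 0 ≤ μ x) (hμ1 : ∑ x, μ x = 1)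
    -- the pseudolabeler depends only on the first view
    (yt : X1 × X2 → Option Y) (hyt : ∀ x : X1 × X2, yt x = yt1 x.1)
    -- conditional independence of the two views given the true label
    (hCI : ∀ (A : Finset X1) (B : Finset X2) (i : Y),
      0 < Pw μ (univ.filter fun x => y x = i) →
      cPw μ (univ.filter fun x : X1 × X2 => x.1 ∈ A ∧ x.2 ∈ B)
          (univ.filter fun x => y x = i) =
        cPw μ (univ.filter fun x : X1 × X2 => x.1 ∈ A)
            (univ.filter fun x => y x = i) *
          cPw μ (univ.filter fun x : X1 × X2 => x.2 ∈ B)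
            (univ.filter fun x => y x = i))
    -- the neighborhood: all points sharing the second view
    (N : X1 × X2 → Finset (X1 × X2))
    (hNdef : ∀ x : X1 × X2, N x = univ.filter fun x' : X1 × X2 => x'.2 = x.2) :
    -- (a) any classifier depending only on the second view is robust everywhere
    (∀ (g : X1 × X2 → Y) (g2 : X2 → Y), (∀ x, g x = g2 x.2) →
      ∀ x : X1 × X2, rob μ N g x = 0) ∧
    -- (b) exact expansion of mistake sets on the uncovered part
    (∀ (g : X1 × X2 → Y) (g2 : X2 → Y), (∀ x, g x = g2 x.2) →
      ∀ i : Y,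
        0 < Pw μ (univ.filter fun x => y x = i) →
        0 < Pw μ (TiSet y yt i) →
        0 < Pw μ (SiGood y yt i) →
        cPw μ ((TiSet y yt i).filter fun x => g x ≠ y x) (TiSet y yt i) > 0 →
        cPw μ (nbhd N ((TiSet y yt i).filter fun x => g x ≠ y x)) (SiGood y yt i) =
          cPw μ ((TiSet y yt i).filter fun x => g x ≠ y x) (TiSet y yt i)) := by
  have key : ∀ (g : X1 × X2 → Y) (g2 : X2 → Y), (∀ x, g x = g2 x.2) → ∀ i : Y,
      ∀ x : X1 × X2, x ∈ nbhd N ((TiSet y yt i).filter fun x => g x ≠ y x) ↔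
        x.2 ∈ ((TiSet y yt i).filter fun x => g x ≠ y x).image Prod.snd := by
    intro g g2 hg i x
    simp only [nbhd, Finset.mem_biUnion, Finset.mem_image, hNdef, Finset.mem_filter,
      Finset.mem_univ, true_and]
    constructor
    · rintro ⟨a, h, h'⟩
      exact ⟨a, h, h'.symm⟩
    · rintro ⟨a, h, h'⟩
      exact ⟨a, h, h'.symm⟩
  refine ⟨?_, ?_⟩
  · intro g g2 hg x
    have : (univ.filter fun x' => g x' ≠ g x) ∩ N x = ∅ := by
      ext z
      simp only [hNdef, hg, Finset.mem_inter, Finset.mem_filter, Finset.mem_univ, true_and,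
        Finset.notMem_empty, iff_false]
      rintro ⟨h, h'⟩
      exact h (by rw [h'])
    unfold rob cPw
    rw [this]
    simp [Pw]
  · intro g g2 hg i h0 hT hS _
    have hk := key g g2 hg i
    set U := (TiSet y yt i).filter fun x => g x ≠ y x with hU
    have e1 := ci_aux μ _ _ _ _ (SiGood y yt i) (nbhd N U)
      (hCI (univ.filter fun a => yt1 a = some i) (U.image Prod.snd) i h0) h0
      (by
        ext x
        simp only [SiGood, hyt, Finset.mem_inter, Finset.mem_filter, Finset.mem_univ, true_and]
        constructor <;> rintro ⟨h, h'⟩ <;> simp_all) hS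
      (by
        ext x
        simp only [SiGood, hyt, hk, Finset.mem_inter, Finset.mem_filter, Finset.mem_univ,
          true_and]
        constructor
        · rintro ⟨⟨h, h'⟩, h2⟩
          exact ⟨h', by rw [h, h2], h2⟩
        · rintro ⟨h', h, h2⟩
          exact ⟨⟨by rw [h, h2], h'⟩, h2⟩)
    have e2 := ci_aux μ _ _ _ _ (TiSet y yt i) U
      (hCI (univ.filter fun a => yt1 a = none) (U.image Prod.snd) i h0) h0
      (by
        ext x
        simp only [TiSet, hyt, Finset.mem_inter, Finset.mem_filter, Finset.mem_univ, true_and])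
      hT
      (by
        ext x
        simp only [Finset.mem_inter, Finset.mem_filter, Finset.mem_univ, true_and]
        constructor
        · rintro ⟨⟨h, h'⟩, h2⟩
          have hx : x ∈ TiSet y yt i := by
            simp only [TiSet, hyt, Finset.mem_filter, Finset.mem_univ, true_and]
            exact ⟨h, h2⟩
          refine ⟨?_, hx⟩
          obtain ⟨z, hz, hzx⟩ := Finset.mem_image.1 h'
          rw [hU, Finset.mem_filter] at hz ⊢
          refine ⟨hx, ?_⟩
          have hz1 : y z = i := (Finset.mem_filter.1 hz.1).2.2
          have hz2 := hz.2
          rw [hg, hzx, hz1] at hz2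
          rw [hg, h2]
          exact hz2
        · rintro ⟨h, h'⟩
          have h3 := (Finset.mem_filter.1 h').2
          rw [hyt] at h3
          exact ⟨⟨h3.1, Finset.mem_image_of_mem _ h⟩, h3.2⟩)
    rw [e1, e2]
end
end

section
/- (One-sided concentration of the empirical expansion ratio for a fixed set.) Let A, B, U ⊆ X with P(A), P(B) > 0, and let n : X → X be a fixed (deterministic) map with n(x) ∈ B for every x ∈ A. Let p = P({x : n(x) ∈ U} | A) and q = P(U | B), and assume q ≥ q̄ for some q̄ > 0. Let x_1, …, x_{n_A} be i.i.d. with law P(·|A) and z_1, …, z_{n_B} i.i.d. with law P(·|B), all mutually independent. Set p̂ = (1/n_A)·Σ_{i=1}^{n_A} 1[n(x_i) ∈ U], q̂ = (1/n_B)·Σ_{j=1}^{n_B} 1[z_j ∈ U], and γ = n_B·q̄/n_A. Then for any δ ∈ (0,1], the probability that p̂/q̂ − p/q > δ is at most 2·exp( −2·n_A·δ² · γ·q̄² / (4 + √γ)² ). -/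
open Finset
open scoped Classical

noncomputable section

variable {X : Type*} [Fintype X] [DecidableEq X]

/-- The conditional point mass function of `P(· | A)`. -/
def condPMF (μ : X → ℝ) (A : Finset X) (x : X) : ℝ :=
  (if x ∈ A then μ x else 0) / Pw μ A

/-- The probability that an i.i.d. sample from `P(· | A)` equals the tuple `xs`. -/
def prodW (μ : X → ℝ) (A : Finset X) {n : ℕ} (xs : Fin n → X) : ℝ :=
  ∏ j, condPMF μ A (xs j)

/-- Probability of an event `E` of two mutually independent i.i.d. samples,
of sizes `nA` from `P(· | A)` and `nB` from `P(· | B)`. -/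
def samplePr (μ : X → ℝ) (A B : Finset X) (nA nB : ℕ)
    (E : (Fin nA → X) → (Fin nB → X) → Prop) : ℝ :=
  ∑ xs : Fin nA → X, ∑ zs : Fin nB → X,
    prodW μ A xs * prodW μ B zs * (if E xs zs then 1 else 0)

/-- Probability of an event of two i.i.d. samples together with an independent
ghost copy of each. -/
def samplePr4 (μ : X → ℝ) (A B : Finset X) (nA nB : ℕ)
    (E : (Fin nA → X) → (Fin nB → X) → (Fin nA → X) → (Fin nB → X) → Prop) : ℝ :=
  ∑ xs : Fin nA → X, ∑ zs : Fin nB → X, ∑ xs' : Fin nA → X, ∑ zs' : Fin nB → X,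
    prodW μ A xs * prodW μ B zs * prodW μ A xs' * prodW μ B zs' *
      (if E xs zs xs' zs' then 1 else 0)

/-- Empirical frequency `(1/n)·Σ_j 1[g(x_j) ∈ U]` of a sample `xs`. -/
def empFreq (U : Finset X) (g : X → X) {n : ℕ} (xs : Fin n → X) : ℝ :=
  (∑ j, if g (xs j) ∈ U then (1 : ℝ) else 0) / n

/-- The empirical expansion ratio `ĉ(U) = p̂(U)/q̂(U)` of a pair of samples. -/
def empRatio (U : Finset X) (g : X → X) {nA nB : ℕ}
    (xs : Fin nA → X) (zs : Fin nB → X) : ℝ :=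
  empFreq U g xs / empFreq U id zs

/-- Hoeffding's lemma for a Bernoulli variable. -/
lemma hoeffding_bern (p t : ℝ) (h0 : 0 ≤ p) (h1 : p ≤ 1) :
    1 - p + p * Real.exp t ≤ Real.exp (p * t + t ^ 2 / 8) := by
  let m : MeasureTheory.Measure ℝ :=
    ENNReal.ofReal (1 - p) • MeasureTheory.Measure.dirac 0 +
      ENNReal.ofReal p • MeasureTheory.Measure.dirac 1
  have hprob : MeasureTheory.IsProbabilityMeasure m := by
    constructor
    simp only [m, MeasureTheory.Measure.add_apply, MeasureTheory.Measure.smul_apply,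
      MeasureTheory.measure_univ, smul_eq_mul, mul_one]
    rw [← ENNReal.ofReal_add (by linarith) h0]
    simp
  have hint : ∀ f : ℝ → ℝ, ∫ x, f x ∂m = (1 - p) * f 0 + p * f 1 := by
    intro f
    rw [MeasureTheory.integral_add_measure]
    · simp [MeasureTheory.integral_smul_measure, ENNReal.toReal_ofReal h0,
        ENNReal.toReal_ofReal (sub_nonneg.2 h1)]
    · exact (MeasureTheory.integrable_dirac (by simp)).smul_measure (by simp)
    · exact (MeasureTheory.integrable_dirac (by simp)).smul_measure (by simp)
  have hmem : ∀ᵐ x ∂m, (id x : ℝ) ∈ Set.Icc (0 : ℝ) 1 := by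
    rw [MeasureTheory.ae_add_measure_iff]
    constructor
    · apply MeasureTheory.Measure.ae_smul_measure
      rw [MeasureTheory.ae_dirac_eq]; simp
    · apply MeasureTheory.Measure.ae_smul_measure
      rw [MeasureTheory.ae_dirac_eq]; simp
  have h := (ProbabilityTheory.hasSubgaussianMGF_of_mem_Icc (μ := m) aemeasurable_id hmem).mgf_le t
  rw [ProbabilityTheory.mgf, hint, hint] at h
  simp only [id] at h
  have e1 : (1 - p) * Real.exp (t * (0 - ((1 - p) * 0 + p * 1))) +
      p * Real.exp (t * (1 - ((1 - p) * 0 + p * 1))) =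
      (1 - p + p * Real.exp t) * Real.exp (-(p * t)) := by
    rw [add_mul, mul_assoc p, ← Real.exp_add]
    congr 3 <;> ring_nf
  rw [e1] at h
  have e2 : Real.exp (p * t + t ^ 2 / 8) = Real.exp (t ^ 2 / 8) * Real.exp (p * t) := by
    rw [← Real.exp_add]; ring_nf
  have e3 : 1 - p + p * Real.exp t =
      (1 - p + p * Real.exp t) * Real.exp (-(p * t)) * Real.exp (p * t) := by
    rw [mul_assoc, ← Real.exp_add]; simp
  rw [e2, e3]
  gcongr
  refine h.trans (le_of_eq ?_)
  congr 1
  norm_num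
  ring

/-- Quadratic upper bound for `exp (-t)`. -/
lemma exp_neg_quad (t : ℝ) (ht : 0 ≤ t) : Real.exp (-t) ≤ 1 - t + t ^ 2 / 2 := by
  have h := Real.quadratic_le_exp_of_nonneg ht
  have h2 : Real.exp (-t) * Real.exp t = 1 := by rw [← Real.exp_add]; simp
  have h3 := Real.exp_pos (-t)
  have h4 : Real.exp (-t) * (1 + t + t ^ 2 / 2) ≤ 1 := by
    exact (mul_le_mul_of_nonneg_left h h3.le).trans h2.le
  have h5 : 0 < 1 + t + t ^ 2 / 2 := by positivity
  by_contra! hc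
  nlinarith [mul_lt_mul_of_pos_right hc h5, sq_nonneg (t ^ 2)]

lemma condPMF_nonneg' (μ : X → ℝ) (A : Finset X) (hμ : ∀ x, 0 ≤ μ x) (x : X) :
    0 ≤ condPMF μ A x := by
  unfold condPMF Pw
  apply div_nonneg
  · split_ifs
    · exact hμ x
    · exact le_rfl
  · exact Finset.sum_nonneg fun i _ => hμ i

lemma condPMF_sum (μ : X → ℝ) (A : Finset X) (hA : 0 < Pw μ A) :
    ∑ x, condPMF μ A x = 1 := by
  unfold condPMF
  rw [← Finset.sum_div, Finset.sum_ite_mem, Finset.univ_inter]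
  exact div_self hA.ne'

lemma prodW_nonneg' (μ : X → ℝ) (A : Finset X) (hμ : ∀ x, 0 ≤ μ x) {n : ℕ} (xs : Fin n → X) :
    0 ≤ prodW μ A xs :=
  Finset.prod_nonneg fun _ _ => condPMF_nonneg' μ A hμ _

lemma prodW_expect (μ : X → ℝ) (A : Finset X) (n : ℕ) (f : X → ℝ) :
    ∑ xs : Fin n → X, prodW μ A xs * ∏ j, f (xs j) = (∑ x, condPMF μ A x * f x) ^ n := by
  unfold prodW
  simp_rw [← Finset.prod_mul_distrib]
  rw [Finset.sum_pow', Fintype.piFinset_univ]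

lemma prodW_sum (μ : X → ℝ) (A : Finset X) (hA : 0 < Pw μ A) (n : ℕ) :
    ∑ xs : Fin n → X, prodW μ A xs = 1 := by
  have := prodW_expect μ A n (fun _ => 1)
  simpa [condPMF_sum μ A hA] using this

lemma cPw_eq (μ : X → ℝ) (A V : Finset X) :
    cPw μ V A = ∑ x, condPMF μ A x * (if x ∈ V then 1 else 0) := by
  unfold cPw condPMF Pw
  simp_rw [mul_ite, mul_one, mul_zero]
  rw [Finset.sum_ite_mem, Finset.univ_inter, ← Finset.sum_div, Finset.sum_ite_mem]

lemma cPw_mem (μ : X → ℝ) (A V : Finset X) (hμ : ∀ x, 0 ≤ μ x) (hA : 0 < Pw μ A) :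
    0 ≤ cPw μ V A ∧ cPw μ V A ≤ 1 := by
  rw [cPw_eq]
  constructor
  · refine Finset.sum_nonneg fun x _ => mul_nonneg (condPMF_nonneg' μ A hμ x) ?_
    split_ifs <;> norm_num
  · refine le_of_le_of_eq ?_ (condPMF_sum μ A hA)
    refine Finset.sum_le_sum fun x _ => ?_
    have := condPMF_nonneg' μ A hμ x
    split_ifs <;> linarith

lemma mgf_eq (μ : X → ℝ) (A V U : Finset X) (g : X → X) (hV : ∀ x, x ∈ V ↔ g x ∈ U)
    (hA : 0 < Pw μ A) (n : ℕ) (t : ℝ) :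
    ∑ xs : Fin n → X, prodW μ A xs * Real.exp (t * ∑ j, if g (xs j) ∈ U then (1 : ℝ) else 0) =
      (1 - cPw μ V A + cPw μ V A * Real.exp t) ^ n := by
  have h : ∑ x, condPMF μ A x * Real.exp (t * if g x ∈ U then (1 : ℝ) else 0) =
      1 - cPw μ V A + cPw μ V A * Real.exp t := by
    have : ∀ x, condPMF μ A x * Real.exp (t * if g x ∈ U then (1 : ℝ) else 0) =
        condPMF μ A x + condPMF μ A x * (if x ∈ V then 1 else 0) * (Real.exp t - 1) := by
      intro x
      by_cases hx : g x ∈ U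
      · simp [hx, hV]
        ring
      · simp [hx, hV]
    simp_rw [this]
    rw [Finset.sum_add_distrib, ← Finset.sum_mul, ← cPw_eq, condPMF_sum μ A hA]
    ring
  rw [← h, ← prodW_expect]
  simp_rw [Finset.mul_sum, Real.exp_sum]

lemma upper_tail (μ : X → ℝ) (A V U : Finset X) (g : X → X) (hV : ∀ x, x ∈ V ↔ g x ∈ U)
    (hμ : ∀ x, 0 ≤ μ x) (hA : 0 < Pw μ A) (n : ℕ) (hn : 0 < n) (a : ℝ) (ha : 0 ≤ a) :
    ∑ xs : Fin n → X, prodW μ A xs *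
      (if cPw μ V A + a ≤ empFreq U g xs then 1 else 0) ≤ Real.exp (-2 * n * a ^ 2) := by
  set p := cPw μ V A with hp
  obtain ⟨hp0, hp1⟩ := cPw_mem μ A V hμ hA
  have hn' : (0 : ℝ) < n := by exact_mod_cast hn
  calc _ ≤ ∑ xs : Fin n → X, prodW μ A xs *
        Real.exp ((4 * a) * ∑ j, if g (xs j) ∈ U then (1 : ℝ) else 0) *
          Real.exp (-(4 * a * (n * (p + a)))) := by
        refine Finset.sum_le_sum fun xs _ => ?_
        rw [mul_assoc]
        refine mul_le_mul_of_nonneg_left ?_ (prodW_nonneg' μ A hμ xs)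
        split_ifs with h
        · rw [← Real.exp_add]
          apply Real.one_le_exp
          unfold empFreq at h
          rw [le_div_iff₀ hn'] at h
          nlinarith
        · positivity
    _ = (1 - p + p * Real.exp (4 * a)) ^ n * Real.exp (-(4 * a * (n * (p + a)))) := by
        rw [← Finset.sum_mul, mgf_eq μ A V U g hV hA]
    _ ≤ Real.exp (p * (4 * a) + (4 * a) ^ 2 / 8) ^ n * Real.exp (-(4 * a * (n * (p + a)))) := by
        have h1 : 0 ≤ 1 - p + p * Real.exp (4 * a) := by
          have := mul_nonneg hp0 (Real.exp_pos (4 * a)).le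
          linarith
        gcongr
        exact hoeffding_bern p (4 * a) hp0 hp1
    _ = _ := by
        rw [← Real.exp_nat_mul, ← Real.exp_add]
        ring_nf

lemma lower_tail (μ : X → ℝ) (A V U : Finset X) (g : X → X) (hV : ∀ x, x ∈ V ↔ g x ∈ U)
    (hμ : ∀ x, 0 ≤ μ x) (hA : 0 < Pw μ A) (n : ℕ) (hn : 0 < n) (a : ℝ) (ha : 0 ≤ a) :
    ∑ xs : Fin n → X, prodW μ A xs *
      (if empFreq U g xs ≤ cPw μ V A * (1 - a) then 1 else 0) ≤
        Real.exp (-(n * cPw μ V A * a ^ 2 / 2)) := by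
  set p := cPw μ V A with hp
  obtain ⟨hp0, hp1⟩ := cPw_mem μ A V hμ hA
  have hn' : (0 : ℝ) < n := by exact_mod_cast hn
  calc _ ≤ ∑ xs : Fin n → X, prodW μ A xs *
        Real.exp ((-a) * ∑ j, if g (xs j) ∈ U then (1 : ℝ) else 0) *
          Real.exp (a * (p * (1 - a) * n)) := by
        refine Finset.sum_le_sum fun xs _ => ?_
        rw [mul_assoc]
        refine mul_le_mul_of_nonneg_left ?_ (prodW_nonneg' μ A hμ xs)
        split_ifs with h
        · rw [← Real.exp_add]
          apply Real.one_le_exp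
          unfold empFreq at h
          rw [div_le_iff₀ hn'] at h
          nlinarith
        · positivity
    _ = (1 - p + p * Real.exp (-a)) ^ n * Real.exp (a * (p * (1 - a) * n)) := by
        rw [← Finset.sum_mul, mgf_eq μ A V U g hV hA]
    _ ≤ Real.exp (p * (-a + a ^ 2 / 2)) ^ n * Real.exp (a * (p * (1 - a) * n)) := by
        have h1 : 0 ≤ 1 - p + p * Real.exp (-a) := by
          have := mul_nonneg hp0 (Real.exp_pos (-a)).le
          linarith
        gcongr
        have h2 := Real.add_one_le_exp (p * (-a + a ^ 2 / 2))
        have h3 := mul_le_mul_of_nonneg_left (exp_neg_quad a ha) hp0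
        linarith
    _ = _ := by
        rw [← Real.exp_nat_mul, ← Real.exp_add]
        ring_nf

/-- Deterministic step: good events imply that the ratio is at most `p / q + δ`. -/
lemma ratio_step (p q ph qh a e δ : ℝ) (hp0 : 0 ≤ p) (hp1 : p ≤ 1) (hq0 : 0 < q) (hq1 : q ≤ 1)
    (he : 0 ≤ e) (he1 : e < 1) (hδ0 : 0 < δ) (hδ1 : δ ≤ 1) (hsum : a + 2 * e ≤ δ * q)
    (h1 : ph < p + a) (h2 : q * (1 - e) < qh) : ph / qh - p / q ≤ δ := by
  have hqe : 0 < q * (1 - e) := mul_pos hq0 (by linarith)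
  have hqh : 0 < qh := hqe.trans h2
  have hr : 0 ≤ p / q := by positivity
  have hpq : p / q * q = p := div_mul_cancel₀ p hq0.ne'
  suffices ph / qh ≤ p / q + δ by linarith
  rw [div_le_iff₀ hqh]
  have h3 : (p / q + δ) * (q * (1 - e)) ≤ (p / q + δ) * qh := by gcongr
  have h4 : (p / q + δ) * (q * (1 - e)) = (p + δ * q) * (1 - e) := by
    linear_combination (1 - e) * hpq
  have h5 : δ * q ≤ 1 := by nlinarith
  nlinarith

/-- Lemma `lemm:fixed-U-concentration`: one-sided concentration of
the empirical expansion ratio for a fixed set. -/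
theorem fixed_set_one_sided_concentration
    (μ : X → ℝ) (A B U : Finset X) (n : X → X) (qbar δ : ℝ) (nA nB : ℕ)
    (hμ : ∀ x, 0 ≤ μ x) (hμ1 : ∑ x, μ x = 1)
    (hA : 0 < Pw μ A) (hB : 0 < Pw μ B)
    (hn : ∀ x ∈ A, n x ∈ B)
    (hqbar : 0 < qbar) (hq : qbar ≤ cPw μ U B)
    (hnA : 0 < nA) (hnB : 0 < nB)
    (hδ0 : 0 < δ) (hδ1 : δ ≤ 1) :
    samplePr μ A B nA nB (fun xs zs =>
        empRatio U n xs zs -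
          cPw μ (univ.filter fun x => n x ∈ U) A / cPw μ U B > δ) ≤
      2 * Real.exp (-2 * nA * δ ^ 2 *
        ((nB * qbar / nA) * qbar ^ 2 / (4 + Real.sqrt (nB * qbar / nA)) ^ 2)) := by
  set p := cPw μ (univ.filter fun x => n x ∈ U) A with hp
  set q := cPw μ U B with hqd
  obtain ⟨hp0, hp1⟩ := cPw_mem μ A (univ.filter fun x => n x ∈ U) hμ hA
  obtain ⟨hq0, hq1⟩ := cPw_mem μ B U hμ hB
  have hnA' : (0 : ℝ) < nA := by exact_mod_cast hnA
  have hnB' : (0 : ℝ) < nB := by exact_mod_cast hnB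
  set γ : ℝ := nB * qbar / nA with hγ
  have hγ0 : 0 < γ := by positivity
  set s := Real.sqrt γ with hs
  have hs0 : 0 < s := Real.sqrt_pos.2 hγ0
  have hss : s ^ 2 = γ := Real.sq_sqrt hγ0.le
  have hγn : nA * γ = nB * qbar := by rw [hγ]; field_simp
  have hqpos : 0 < q := lt_of_lt_of_le hqbar hq
  set a := δ * qbar * s / (4 + s) with ha
  set e := 2 * δ * qbar / (4 + s) with he
  have ha0 : 0 ≤ a := by positivity
  have he0 : 0 ≤ e := by positivity
  have hsum0 : a + 2 * e = δ * qbar := by rw [ha, he]; field_simp; ring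
  have hsum : a + 2 * e ≤ δ * q := by rw [hsum0]; gcongr
  have he1 : e < 1 := by
    have : δ * q ≤ 1 := by nlinarith
    linarith
  have hU := upper_tail μ A (univ.filter fun x => n x ∈ U) U n (by simp) hμ hA nA hnA a ha0
  have hL := lower_tail μ B U U id (by simp) hμ hB nB hnB e he0
  have eU : -2 * nA * a ^ 2 = -2 * nA * δ ^ 2 * (γ * qbar ^ 2 / (4 + s) ^ 2) := by
    rw [ha, ← hss]; field_simp
  have eL : -(nB * q * e ^ 2 / 2) ≤ -2 * nA * δ ^ 2 * (γ * qbar ^ 2 / (4 + s) ^ 2) := by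
    have h1 : -2 * nA * δ ^ 2 * (γ * qbar ^ 2 / (4 + s) ^ 2) = -(nB * qbar * e ^ 2 / 2) := by
      rw [← hγn, he]; field_simp
    rw [h1]
    gcongr
  have hmain : samplePr μ A B nA nB (fun xs zs => empRatio U n xs zs - p / q > δ) ≤
      (∑ xs : Fin nA → X, prodW μ A xs * (if p + a ≤ empFreq U n xs then 1 else 0)) +
      (∑ zs : Fin nB → X, prodW μ B zs * (if empFreq U id zs ≤ q * (1 - e) then 1 else 0)) := by
    have r1 : (∑ xs : Fin nA → X, prodW μ A xs * (if p + a ≤ empFreq U n xs then 1 else 0)) =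
        ∑ xs : Fin nA → X, ∑ zs : Fin nB → X, prodW μ A xs * prodW μ B zs *
          (if p + a ≤ empFreq U n xs then (1 : ℝ) else 0) := by
      refine Finset.sum_congr rfl fun xs _ => ?_
      rw [← Finset.sum_mul, ← Finset.mul_sum, prodW_sum μ B hB, mul_one]
    have r2 : (∑ zs : Fin nB → X, prodW μ B zs *
          (if empFreq U id zs ≤ q * (1 - e) then 1 else 0)) =
        ∑ xs : Fin nA → X, ∑ zs : Fin nB → X, prodW μ A xs * prodW μ B zs *
          (if empFreq U id zs ≤ q * (1 - e) then (1 : ℝ) else 0) := by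
      simp_rw [mul_assoc]
      simp_rw [← Finset.mul_sum]
      rw [← Finset.sum_mul, prodW_sum μ A hA, one_mul]
    rw [r1, r2, ← Finset.sum_add_distrib]
    unfold samplePr
    refine Finset.sum_le_sum fun xs _ => ?_
    rw [← Finset.sum_add_distrib]
    refine Finset.sum_le_sum fun zs _ => ?_
    rw [← mul_add]
    refine mul_le_mul_of_nonneg_left ?_
      (mul_nonneg (prodW_nonneg' μ A hμ xs) (prodW_nonneg' μ B hμ zs))
    by_cases c1 : p + a ≤ empFreq U n xs
    · rw [if_pos c1]
      split_ifs <;> norm_num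
    · by_cases c2 : empFreq U id zs ≤ q * (1 - e)
      · rw [if_pos c2]
        split_ifs <;> norm_num
      · have := ratio_step p q (empFreq U n xs) (empFreq U id zs) a e δ hp0 hp1 hqpos hq1
          he0 he1 hδ0 hδ1 hsum (not_le.1 c1) (not_le.1 c2)
        rw [if_neg (by unfold empRatio; exact not_lt.2 this), if_neg c1, if_neg c2]
        norm_num
  have hU' := hU.trans (Real.exp_le_exp.2 eU.le)
  have hL' := hL.trans (Real.exp_le_exp.2 eL)
  linarith [hmain.trans (add_le_add hU' hL')]
end
end

section
/- (Exact value of the total-variation term in Fu et al.'s weak-supervision bound.) Let Y = {0,1} and suppose: the two classes are balanced, P(X_0) = P(X_1) = 1/2; the weak labels err at equal rates α on each covered class, P({x : ỹ(x) ≠ y(x)} | S ∩ X_j) = α for j ∈ {0,1} with 0 < α < 1/2; and the weak labels abstain independently of the class, P(T | X_j) = P(T) for j ∈ {0,1} (assume P(S ∩ X_j) > 0 for j ∈ {0,1}). For each weak-label value v ∈ {0, 1, ∅} with P({x : ỹ(x) = v}) > 0 and each j ∈ {0,1}, let π(j|v) = P(X_j | {x : ỹ(x) = v}) be the posterior probability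 of true label j given weak label v. Then the expectation over x drawn from P of Σ_{j ∈ {0,1}} |1[y(x) = j] − π(j | ỹ(x))| equals P(S)·4α(1−α) + P(T). -/
open Finset
open scoped Classical

noncomputable section

variable {X Y : Type*} [Fintype X] [DecidableEq X] [DecidableEq Y]

/-- Proposition `prop:existing-bound`: exact value of the
total-variation term in Fu et al.'s weak-supervision bound. Labels are booleans,
with `false` playing the role of `0` and `true` that of `1`; `π(j | v)` is the
posterior `P(X_j | ỹ = v)` of the true label given the weak label. -/
theorem fu_total_variation_term
    (μ : X → ℝ) (y : X → Bool) (yt : X → Option Bool) (α : ℝ)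
    (hμ : ∀ x, 0 ≤ μ x) (hμ1 : ∑ x, μ x = 1)
    (hbal : ∀ j : Bool, Pw μ (univ.filter fun x => y x = j) = 1 / 2)
    (hα0 : 0 < α) (hα : α < 1 / 2)
    (herr : ∀ j : Bool,
      cPw μ (univ.filter fun x => yt x ≠ some (y x))
        (Scov yt ∩ univ.filter fun x => y x = j) = α)
    (habst : ∀ j : Bool,
      cPw μ (univ \ Scov yt) (univ.filter fun x => y x = j) =
        Pw μ (univ \ Scov yt))
    (hpos : ∀ j : Bool, 0 < Pw μ (Scov yt ∩ univ.filter fun x => y x = j)) :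
    (∑ x, μ x * ∑ j : Bool,
        |(if y x = j then (1 : ℝ) else 0) -
          cPw μ (univ.filter fun x' => y x' = j)
            (univ.filter fun x' => yt x' = yt x)|) =
      Pw μ (Scov yt) * (4 * α * (1 - α)) + Pw μ (univ \ Scov yt) := by
  have key : ∀ F : Option Bool → Bool → ℝ, ∑ x, μ x * F (yt x) (y x) =
      ∑ v : Option Bool, ∑ j : Bool,
        (∑ x, μ x * (if yt x = v ∧ y x = j then 1 else 0)) * F v j := by
    intro F
    simp_rw [Finset.sum_mul]
    rw [Finset.sum_congr rfl (fun v _ => Finset.sum_comm), Finset.sum_comm]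
    refine Finset.sum_congr rfl fun x _ => ?_
    rw [Finset.sum_eq_single (yt x), Finset.sum_eq_single (y x)]
    · simp
    · intro b _ hb
      simp [Ne.symm hb]
    · simp
    · intro b _ hb
      simp [Ne.symm hb]
    · simp
  obtain ⟨m, hm⟩ : ∃ m : Option Bool → Bool → ℝ, ∀ v j,
      m v j = ∑ x, μ x * (if yt x = v ∧ y x = j then 1 else 0) := ⟨_, fun _ _ => rfl⟩
  simp_rw [← hm] at key
  have hP : ∀ (A : Finset X) (G : Option Bool → Bool → Prop),
      (∀ x, x ∈ A ↔ G (yt x) (y x)) →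
      Pw μ A = ∑ v : Option Bool, ∑ j : Bool, m v j * (if G v j then 1 else 0) := by
    intro A G h
    rw [← key (fun v j => if G v j then 1 else 0), Pw]
    simp only [← h, mul_ite, mul_one, mul_zero]
    simp
  have hX : ∀ j, Pw μ (univ.filter fun x => y x = j) = _ :=
    fun j => hP _ (fun _ i => i = j) (by simp)
  have hS : Pw μ (Scov yt) = _ := hP _ (fun v _ => v ≠ none) (by simp [Scov])
  have hT : Pw μ (univ \ Scov yt) = _ := hP _ (fun v _ => v = none) (by simp [Scov])
  have hSX : ∀ j, Pw μ (Scov yt ∩ univ.filter fun x => y x = j) = _ :=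
    fun j => hP _ (fun v i => v ≠ none ∧ i = j) (by simp [Scov])
  have hTX : ∀ j, Pw μ ((univ \ Scov yt) ∩ univ.filter fun x => y x = j) = _ :=
    fun j => hP _ (fun v i => v = none ∧ i = j) (by simp [Scov])
  have hE : ∀ j, Pw μ ((univ.filter fun x => yt x ≠ some (y x)) ∩
      (Scov yt ∩ univ.filter fun x => y x = j)) = _ :=
    fun j => hP _ (fun v i => v ≠ some i ∧ v ≠ none ∧ i = j) (by simp [Scov])
  have hV : ∀ v, Pw μ (univ.filter fun x => yt x = v) = _ :=
    fun v => hP _ (fun w _ => w = v) (by simp)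
  have hXV : ∀ j v, Pw μ ((univ.filter fun x => y x = j) ∩ univ.filter fun x => yt x = v) = _ :=
    fun j v => hP _ (fun w i => i = j ∧ w = v) (by simp)
  rw [key (fun v i => ∑ j : Bool, |(if i = j then (1 : ℝ) else 0) -
          cPw μ (univ.filter fun x' => y x' = j)
            (univ.filter fun x' => yt x' = v)|)]
  simp only [cPw] at herr habst ⊢
  simp only [hbal] at habst
  simp only [hX] at hbal
  simp only [hE, hSX] at herr
  simp only [hT, hTX] at habst
  simp only [hSX] at hpos
  simp only [hXV, hV, hS, hT]
  clear hX hS hT hSX hTX hE hV hXV hP key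
  have b0 := hbal false
  have b1 := hbal true
  have e0 := herr false
  have e1 := herr true
  have a0 := habst false
  have p0 := hpos false
  have p1 := hpos true
  simp [Fintype.sum_option] at b0 b1 e0 e1 a0 p0 p1 ⊢
  rw [div_eq_iff p0.ne'] at e0
  rw [div_eq_iff p1.ne'] at e1
  clear hm hbal herr habst hpos
  generalize m none false = t0 at *
  generalize m none true = t1 at *
  generalize m (some false) false = c00 at *
  generalize m (some true) false = c10 at *
  generalize m (some false) true = c01 at *
  generalize m (some true) true = c11 at *
  have ht : t1 = t0 := by linarith
  subst ht
  obtain ⟨s, hs⟩ : ∃ s, s = c10 + c00 := ⟨_, rfl⟩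
  have hs' : c11 + c01 = s := by linarith
  rw [← hs] at e0 p0
  rw [hs'] at e1
  have g0 : c00 = (1 - α) * s := by linarith
  have g1 : c11 = (1 - α) * s := by linarith
  have hsne := p0.ne'
  have d1 : (1 - α) * s + α * s = s := by ring
  have d2 : α * s + (1 - α) * s = s := by ring
  rw [g0, g1, e0, e1, d1, d2, mul_div_cancel_right₀ _ hsne, mul_div_cancel_right₀ _ hsne,
    abs_of_pos (show 0 < 1 - (1 - α) by linarith), abs_of_pos hα0,
    abs_of_pos (show 0 < 1 - α by linarith)]
  have hT : t1 * (|1 - t1 / (t1 + t1)| + |t1 / (t1 + t1)|) = t1 := by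
    by_cases h : t1 = 0
    · simp [h]
    · have : t1 / (t1 + t1) = 1 / 2 := by
        field_simp
        norm_num
      rw [this]
      norm_num
  rw [add_comm |t1 / (t1 + t1)|, hT]
  ring
end
end
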